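/- Let n and k be positive integers and let λ = (λ₁, λ₂, …, λ_m) be a partition of n with n ≥ k + λ₂. Then there is a bijection between the set KT^k_{(n),λ} of Kronecker tableaux of length k, initial shape (n) and final shape λ, and the set of sequences ν⁰, ν¹, …, ν^k of partitions such that ν⁰ = ∅, ν^k = λ̄, and for every 0 ≤ i < k one of the following holds: ν^{i+1} is obtained from ν^i by adding one corner; ν^{i+1} is obtained from ν^i by removing one corner; ν^{i+1} differs from ν^i by the position of a corner; or ν^{i+1} = ν^i together with the datum of one distinguished corner of ν^{i+1}. In particular these two finite sets have the same cardinality. -/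

import Mathlib

open Finset

namespace KroneckerPaper

/-- A (removable) corner of a Young diagram: a cell with no cell below it nor to its right
(in English notation; equivalently, in French notation, a cell at the right end of its row
with no cell above it). -/
def IsCorner (μ : YoungDiagram) (c : ℕ × ℕ) : Prop :=
  c ∈ μ ∧ (c.1 + 1, c.2) ∉ μ ∧ (c.1, c.2 + 1) ∉ μ

/-- The *first corner* of a Young diagram: the unique corner lying on a row of maximal
length. -/
def IsFirstCorner (μ : YoungDiagram) (c : ℕ × ℕ) : Prop :=
  IsCorner μ c ∧ μ.rowLen c.1 = μ.rowLen 0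

/-- `μ'` is obtained from `μ` by adding one new cell which is a corner of `μ'`. -/
def AddCorner (μ μ' : YoungDiagram) : Prop :=
  ∃ c, IsCorner μ' c ∧ c ∉ μ.cells ∧ μ'.cells = insert c μ.cells

/-- `μ'` is obtained from `μ` by removing one corner of `μ`. -/
def RemoveCorner (μ μ' : YoungDiagram) : Prop :=
  ∃ c, IsCorner μ c ∧ μ'.cells = μ.cells.erase c

/-- `μ' ≠ μ` *differs from `μ` by the position of a corner*: it is obtained from `μ` by
removing a corner of `μ` and adding a new cell which is a corner of `μ'`. -/
def MoveCorner (μ μ' : YoungDiagram) : Prop :=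
  μ' ≠ μ ∧ ∃ c c', IsCorner μ c ∧ IsCorner μ' c' ∧ c' ∉ μ.cells.erase c ∧
    μ'.cells = insert c' (μ.cells.erase c)

/-- The one-row Young diagram `(n)`. -/
def rowDiagram (n : ℕ) : YoungDiagram :=
  YoungDiagram.ofRowLens [n] (List.sortedGE_iff_pairwise.2 (List.pairwise_singleton _ n))

/-- The Young diagram obtained by deleting the first (longest) row, i.e. the truncated
partition `λ̄ = (λ₂, …, λ_m)` of `λ = (λ₁, λ₂, …, λ_m)`. -/
def truncate (μ : YoungDiagram) : YoungDiagram where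
  cells := (μ.cells.filter fun c => 1 ≤ c.1).image fun c => (c.1 - 1, c.2)
  isLowerSet := by
    rintro ⟨i1, j1⟩ ⟨i2, j2⟩ ⟨hi, hj⟩ h
    simp only [Finset.coe_image, Finset.coe_filter, Set.mem_image, Set.mem_setOf_eq,
      Finset.mem_coe, YoungDiagram.mem_cells] at h ⊢
    obtain ⟨⟨a, b⟩, ⟨ha, ha1⟩, heq⟩ := h
    simp only [Prod.mk.injEq] at heq
    exact ⟨(i2 + 1, j2), ⟨μ.up_left_mem (by omega) (by omega) ha, by omega⟩, by simp⟩

/-- A *Kronecker tableau* of length `k`, initial shape `μ` and final shape `lam`: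
a sequence `μ⁰ = μ, μ¹, …, μ^k = lam` of diagrams such that each `μ^{i+1}` either differs
from `μ^i` by the position of a corner, or equals `μ^i` together with the datum of a
distinguished corner of `μ^{i+1}` other than its first corner. -/
structure KroneckerTableau (k : ℕ) (μ lam : YoungDiagram) where
  seq : Fin (k + 1) → YoungDiagram
  dist : Fin k → Option (ℕ × ℕ)
  init : seq 0 = μ
  final : seq (Fin.last k) = lam
  step : ∀ i : Fin k,
    (MoveCorner (seq i.castSucc) (seq i.succ) ∧ dist i = none) ∨
    (seq i.succ = seq i.castSucc ∧
      ∃ c, dist i = some c ∧ IsCorner (seq i.succ) c ∧ ¬ IsFirstCorner (seq i.succ) c)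

/-- A *partial standard tableau* of shape `α` with labels in `{1, …, k}`: a labelling of the
cells of `α` by pairwise distinct integers of `{1, …, k}` increasing along rows and columns
(cells outside `α` are labelled `0` by convention). -/
structure PartialST (α : YoungDiagram) (k : ℕ) where
  label : ℕ × ℕ → ℕ
  mem_of_cell : ∀ c ∈ α, label c ∈ Finset.Icc 1 k
  zero_of_not_cell : ∀ c, c ∉ α → label c = 0
  injOn : ∀ c ∈ α, ∀ c' ∈ α, label c = label c' → c = c'
  row_incr : ∀ i j1 j2 : ℕ, j1 < j2 → (i, j2) ∈ α → label (i, j1) < label (i, j2)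
  col_incr : ∀ i1 i2 j : ℕ, i1 < i2 → (i2, j) ∈ α → label (i1, j) < label (i2, j)

/-- `f^α`, the number of standard Young tableaux of shape `α`. -/
noncomputable def fSYT (α : YoungDiagram) : ℕ :=
  Nat.card (PartialST α α.card)

/-- `p₂ n k`: the number of partitions of an `n`-element set into exactly `k` blocks, each of
size at least `2` (associated Stirling numbers of the second kind). -/
noncomputable def p2 (n k : ℕ) : ℕ :=
  Nat.card {P : Finpartition (Finset.univ : Finset (Fin n)) //
    P.parts.card = k ∧ ∀ b ∈ P.parts, 2 ≤ b.card}

/-- Every non-trivial cycle of `π` is *decreasing*: `π x < x` for every element `x` of a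
non-trivial cycle which is not the minimum of its cycle. -/
def DecCycles {S : Type*} [LinearOrder S] (π : Equiv.Perm S) : Prop :=
  ∀ x, π x ≠ x → (∃ y, π.SameCycle x y ∧ y < x) → π x < x

/-- A pair `(T, π)` of a partial standard tableau of shape `α` with labels in `{1, …, k}`
and a permutation `π` of `{1, …, k}` all of whose non-trivial cycles are decreasing, such
that every fixed point of `π` is a label of `T` and every label of `T` is the greatest
element of its cycle in `π`. -/
structure TabPerm (k : ℕ) (α : YoungDiagram) where
  T : PartialST α k
  π : Equiv.Perm ℕ
  perm_of : ∀ x : ℕ, x ∉ Finset.Icc 1 k → π x = x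
  dec : DecCycles π
  fix_mem : ∀ x ∈ Finset.Icc 1 k, π x = x → ∃ c ∈ α, T.label c = x
  label_max : ∀ c ∈ α, ∀ y : ℕ, π.SameCycle (T.label c) y → y ≤ T.label c


/-- A sequence `ν⁰ = ∅, ν¹, …, ν^k = α` of diagrams in which each `ν^{i+1}` is obtained
from `ν^i` by adding a corner, removing a corner, or moving a corner, or `ν^{i+1} = ν^i`
together with the datum of one distinguished corner of `ν^{i+1}`. -/
structure CorrSeq (k : ℕ) (α : YoungDiagram) where
  seq : Fin (k + 1) → YoungDiagram
  dist : Fin k → Option (ℕ × ℕ)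
  init : seq 0 = ⊥
  final : seq (Fin.last k) = α
  step : ∀ i : Fin k,
    ((AddCorner (seq i.castSucc) (seq i.succ) ∨ RemoveCorner (seq i.castSucc) (seq i.succ) ∨
        MoveCorner (seq i.castSucc) (seq i.succ)) ∧ dist i = none) ∨
    (seq i.succ = seq i.castSucc ∧ ∃ c, dist i = some c ∧ IsCorner (seq i.succ) c)

theorem mem_truncate (μ : YoungDiagram) (i j : ℕ) :
    (i, j) ∈ truncate μ ↔ (i + 1, j) ∈ μ := by
  rw [← YoungDiagram.mem_cells]
  simp only [truncate, Finset.mem_image, Finset.mem_filter, YoungDiagram.mem_cells]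
  constructor
  · rintro ⟨⟨a, b⟩, ⟨h, h1⟩, he⟩
    simp only [Prod.mk.injEq] at he h1
    obtain ⟨rfl, rfl⟩ := he
    rwa [Nat.sub_add_cancel h1]
  · intro h
    exact ⟨(i + 1, j), ⟨h, by simp⟩, by simp⟩

theorem card_split (μ : YoungDiagram) : μ.card = μ.rowLen 0 + (truncate μ).card := by
  have h1 : (truncate μ).card = (μ.cells.filter fun c => 1 ≤ c.1).card := by
    change (((μ.cells.filter fun c => 1 ≤ c.1).image fun c => (c.1 - 1, c.2))).card = _
    apply Finset.card_image_of_injOn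
    rintro ⟨a, b⟩ ha ⟨c, d⟩ hc h
    simp at ha hc h
    ext <;> simp <;> omega
  rw [YoungDiagram.rowLen_eq_card, h1]
  change μ.cells.card = (μ.cells.filter fun c => c.1 = 0).card + _
  rw [← Finset.card_filter_add_card_filter_not (s := μ.cells) (fun c => c.1 = 0)]
  congr 2
  ext c
  simp only [Finset.mem_filter]
  have : ¬ c.1 = 0 ↔ 1 ≤ c.1 := by omega
  rw [this]

theorem ext_mem {μ μ' : YoungDiagram} (h0 : ∀ j, (0, j) ∈ μ ↔ (0, j) ∈ μ')
    (h1 : ∀ i j, (i + 1, j) ∈ μ ↔ (i + 1, j) ∈ μ') : μ = μ' := by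
  ext ⟨i, j⟩
  simp only [YoungDiagram.mem_cells]
  cases i with
  | zero => exact h0 j
  | succ i => exact h1 i j

theorem eq_of_truncate {μ μ' : YoungDiagram} (hc : μ.card = μ'.card)
    (ht : truncate μ = truncate μ') : μ = μ' := by
  have a := card_split μ
  have b := card_split μ'
  rw [ht] at a
  apply ext_mem
  · intro j
    rw [YoungDiagram.mem_iff_lt_rowLen, YoungDiagram.mem_iff_lt_rowLen]
    have : μ.rowLen 0 = μ'.rowLen 0 := by omega
    rw [this]
  · intro i j
    rw [← mem_truncate, ← mem_truncate, ht]

theorem exists_extend (n : ℕ) (ν : YoungDiagram) (h : ν.card + ν.rowLen 0 ≤ n) :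
    ∃ μ : YoungDiagram, μ.card = n ∧ truncate μ = ν := by
  let μ : YoungDiagram :=
    { cells := (Finset.range (n - ν.card)).image (fun j => (0, j)) ∪
        ν.cells.image (fun c => (c.1 + 1, c.2))
      isLowerSet := by
        rintro ⟨i1, j1⟩ ⟨i2, j2⟩ ⟨hi, hj⟩ hm
        simp only [Finset.coe_union, Finset.coe_image, Set.mem_union, Set.mem_image,
          Finset.mem_coe, Finset.mem_range, YoungDiagram.mem_cells, Prod.mk.injEq] at hm ⊢
        simp only at hi hj
        rcases hm with ⟨j, hj', rfl, rfl⟩ | ⟨⟨a, b⟩, hab, rfl, rfl⟩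
        · left
          exact ⟨j2, by omega, by omega, rfl⟩
        · simp only at hi hj
          cases i2 with
          | zero =>
            left
            refine ⟨j2, ?_, rfl, rfl⟩
            have := ν.up_left_mem (Nat.zero_le a) hj hab
            rw [YoungDiagram.mem_iff_lt_rowLen] at this
            omega
          | succ i2 =>
            right
            exact ⟨(i2, j2), ν.up_left_mem (by omega) hj hab, rfl, rfl⟩ }
  have hμ : ∀ i j, (i, j) ∈ μ ↔ (i = 0 ∧ j < n - ν.card) ∨ ∃ i', i = i' + 1 ∧ (i', j) ∈ ν := by
    intro i j
    rw [← YoungDiagram.mem_cells]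
    simp only [μ, Finset.mem_union, Finset.mem_image, Finset.mem_range, YoungDiagram.mem_cells,
      Prod.mk.injEq]
    constructor
    · rintro (⟨j, hj', rfl, rfl⟩ | ⟨⟨a, b⟩, hab, rfl, rfl⟩)
      · exact Or.inl ⟨rfl, hj'⟩
      · exact Or.inr ⟨a, rfl, hab⟩
    · rintro (⟨rfl, hj⟩ | ⟨i', rfl, hi⟩)
      · exact Or.inl ⟨j, hj, rfl, rfl⟩
      · exact Or.inr ⟨(i', j), hi, rfl, rfl⟩
  have ht : truncate μ = ν := by
    ext ⟨i, j⟩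
    rw [YoungDiagram.mem_cells, YoungDiagram.mem_cells, mem_truncate, hμ]
    constructor
    · rintro (⟨h, -⟩ | ⟨i', h, h'⟩)
      · omega
      · obtain rfl : i = i' := by omega
        exact h'
    · intro h
      exact Or.inr ⟨i, rfl, h⟩
  refine ⟨μ, ?_, ht⟩
  have hr : ∀ j, j < μ.rowLen 0 ↔ j < n - ν.card := by
    intro j
    rw [← YoungDiagram.mem_iff_lt_rowLen, hμ]
    simp
  have hr0 : μ.rowLen 0 = n - ν.card := by
    have h1 := hr (μ.rowLen 0)
    have h2 := hr (n - ν.card)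
    omega
  rw [card_split, ht, hr0]
  omega

theorem mem_rowDiagram (n i j : ℕ) : (i, j) ∈ rowDiagram n ↔ i = 0 ∧ j < n := by
  rw [rowDiagram, YoungDiagram.mem_ofRowLens]
  constructor
  · rintro ⟨h, h'⟩
    have hi : i = 0 := by simpa using h
    subst hi
    exact ⟨rfl, by simpa using h'⟩
  · rintro ⟨rfl, h⟩
    exact ⟨by simp, by simpa using h⟩

theorem truncate_rowDiagram (n : ℕ) : truncate (rowDiagram n) = ⊥ := by
  ext ⟨i, j⟩
  rw [YoungDiagram.mem_cells, mem_truncate, mem_rowDiagram]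
  simp

theorem card_rowDiagram (n : ℕ) : (rowDiagram n).card = n := by
  have hr : ∀ j, j < (rowDiagram n).rowLen 0 ↔ j < n := by
    intro j
    rw [← YoungDiagram.mem_iff_lt_rowLen, mem_rowDiagram]
    simp
  rw [card_split, truncate_rowDiagram]
  have h1 := hr ((rowDiagram n).rowLen 0)
  have h2 := hr n
  have h3 : (⊥ : YoungDiagram).card = 0 := by simp
  omega

theorem corner_succ (μ : YoungDiagram) (i j : ℕ) :
    IsCorner (truncate μ) (i, j) ↔ IsCorner μ (i + 1, j) := by
  simp only [IsCorner, mem_truncate]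

theorem rowLen_truncate (μ : YoungDiagram) (i : ℕ) :
    (truncate μ).rowLen i = μ.rowLen (i + 1) := by
  have hr : ∀ j, j < (truncate μ).rowLen i ↔ j < μ.rowLen (i + 1) := by
    intro j
    rw [← YoungDiagram.mem_iff_lt_rowLen, ← YoungDiagram.mem_iff_lt_rowLen, mem_truncate]
  have h1 := hr ((truncate μ).rowLen i)
  have h2 := hr (μ.rowLen (i + 1))
  omega

theorem cells_add {μ μ' : YoungDiagram} {c : ℕ × ℕ} :
    μ'.cells = insert c μ.cells ↔ ∀ i j, (i, j) ∈ μ' ↔ (i, j) = c ∨ (i, j) ∈ μ := by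
  rw [Finset.ext_iff]
  simp only [Prod.forall, Finset.mem_insert, YoungDiagram.mem_cells]

theorem cells_erase {μ μ' : YoungDiagram} {c : ℕ × ℕ} :
    μ'.cells = μ.cells.erase c ↔ ∀ i j, (i, j) ∈ μ' ↔ (i, j) ≠ c ∧ (i, j) ∈ μ := by
  rw [Finset.ext_iff]
  simp only [Prod.forall, Finset.mem_erase, YoungDiagram.mem_cells]

theorem cells_move {μ μ' : YoungDiagram} {c c' : ℕ × ℕ} :
    μ'.cells = insert c' (μ.cells.erase c) ↔
      ∀ i j, (i, j) ∈ μ' ↔ (i, j) = c' ∨ ((i, j) ≠ c ∧ (i, j) ∈ μ) := by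
  rw [Finset.ext_iff]
  simp only [Prod.forall, Finset.mem_insert, Finset.mem_erase, YoungDiagram.mem_cells]

theorem card_move {μ μ' : YoungDiagram} (h : MoveCorner μ μ') : μ'.card = μ.card := by
  obtain ⟨-, c, c', hc, -, hn, he⟩ := h
  have hm : c ∈ μ.cells := hc.1
  change μ'.cells.card = μ.cells.card
  rw [he, Finset.card_insert_of_notMem hn, Finset.card_erase_of_mem hm]
  have := Finset.card_pos.2 ⟨c, hm⟩
  omega

theorem move_fwd {μ μ' : YoungDiagram} (h : MoveCorner μ μ') :
    AddCorner (truncate μ) (truncate μ') ∨ RemoveCorner (truncate μ) (truncate μ') ∨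
      MoveCorner (truncate μ) (truncate μ') := by
  have hcard := card_move h
  obtain ⟨hne, ⟨i, j⟩, ⟨i', j'⟩, hc, hc', hn, he⟩ := h
  rw [Finset.mem_erase, YoungDiagram.mem_cells] at hn
  rw [cells_move] at he
  have htne : truncate μ' ≠ truncate μ := fun ht => hne (eq_of_truncate hcard ht)
  cases i with
  | zero =>
    cases i' with
    | zero =>
      exfalso
      apply htne
      ext ⟨a, b⟩
      rw [YoungDiagram.mem_cells, YoungDiagram.mem_cells, mem_truncate, mem_truncate, he]
      simp
    | succ i' =>
      left
      refine ⟨(i', j'), (corner_succ _ _ _).2 hc', ?_, ?_⟩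
      · rw [YoungDiagram.mem_cells, mem_truncate]
        intro h
        exact hn ⟨by simp, h⟩
      · rw [cells_add]
        intro a b
        rw [mem_truncate, mem_truncate, he]
        simp
  | succ i =>
    cases i' with
    | zero =>
      right; left
      refine ⟨(i, j), (corner_succ _ _ _).2 hc, ?_⟩
      rw [cells_erase]
      intro a b
      rw [mem_truncate, mem_truncate, he]
      simp
    | succ i' =>
      right; right
      refine ⟨htne, (i, j), (i', j'), (corner_succ _ _ _).2 hc, (corner_succ _ _ _).2 hc', ?_, ?_⟩
      · rw [Finset.mem_erase, YoungDiagram.mem_cells, mem_truncate]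
        rintro ⟨h1, h2⟩
        exact hn ⟨by simpa using h1, h2⟩
      · rw [cells_move]
        intro a b
        rw [mem_truncate, mem_truncate, he]
        simp

theorem move_bwd {μ μ' : YoungDiagram} (hcard : μ.card = μ'.card)
    (h : AddCorner (truncate μ) (truncate μ') ∨ RemoveCorner (truncate μ) (truncate μ') ∨
      MoveCorner (truncate μ) (truncate μ')) : MoveCorner μ μ' := by
  have s := card_split μ
  have s' := card_split μ'
  rcases h with ⟨⟨i, j⟩, hc, hn, he⟩ | ⟨⟨i, j⟩, hc, he⟩ | h
  · have hk : (truncate μ').card = (truncate μ).card + 1 := by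
      change (truncate μ').cells.card = _
      rw [he, Finset.card_insert_of_notMem hn]
    rw [YoungDiagram.mem_cells, mem_truncate] at hn
    rw [cells_add] at he
    have hlen : μ.rowLen 0 = μ'.rowLen 0 + 1 := by omega
    rw [corner_succ] at hc
    have hanti := μ'.rowLen_anti 0 1 (by omega)
    refine ⟨?_, (0, μ'.rowLen 0), (i + 1, j), ⟨?_, ?_, ?_⟩, hc, ?_, ?_⟩
    · rintro rfl
      exact hn hc.1
    · rw [YoungDiagram.mem_iff_lt_rowLen]; omega
    · intro h
      have h2 := (he 0 (μ'.rowLen 0)).2 (Or.inr ((mem_truncate _ _ _).2 h))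
      rw [mem_truncate, YoungDiagram.mem_iff_lt_rowLen, Nat.zero_add] at h2
      omega
    · rw [YoungDiagram.mem_iff_lt_rowLen]; simp only; omega
    · rw [Finset.mem_erase, YoungDiagram.mem_cells]
      exact fun h => hn h.2
    · rw [cells_move]
      intro a b
      cases a with
      | zero =>
        rw [YoungDiagram.mem_iff_lt_rowLen, YoungDiagram.mem_iff_lt_rowLen]
        have e0 : ¬ (0 = i + 1) := by omega
        simp only [Prod.mk.injEq, ne_eq, e0, false_and, true_and, false_or, not_false_eq_true]
        omega
      | succ a =>
        rw [← mem_truncate, ← mem_truncate, he]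
        simp
  · have hk : (truncate μ').card + 1 = (truncate μ).card := by
      change (truncate μ').cells.card + 1 = (truncate μ).cells.card
      rw [he, Finset.card_erase_add_one]
      exact hc.1
    rw [cells_erase] at he
    have hlen : μ.rowLen 0 + 1 = μ'.rowLen 0 := by omega
    rw [corner_succ] at hc
    have hanti := μ.rowLen_anti 0 1 (by omega)
    refine ⟨?_, (i + 1, j), (0, μ.rowLen 0), hc, ⟨?_, ?_, ?_⟩, ?_, ?_⟩
    · rintro rfl
      omega
    · rw [YoungDiagram.mem_iff_lt_rowLen]; omega
    · intro h
      have h2 := ((he 0 (μ.rowLen 0)).1 ((mem_truncate _ _ _).2 h)).2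
      rw [mem_truncate, YoungDiagram.mem_iff_lt_rowLen, Nat.zero_add] at h2
      omega
    · rw [YoungDiagram.mem_iff_lt_rowLen]; simp only; omega
    · rw [Finset.mem_erase, YoungDiagram.mem_cells, YoungDiagram.mem_iff_lt_rowLen]
      rintro ⟨-, h⟩
      omega
    · rw [cells_move]
      intro a b
      cases a with
      | zero =>
        rw [YoungDiagram.mem_iff_lt_rowLen, YoungDiagram.mem_iff_lt_rowLen]
        have e0 : ¬ (0 = i + 1) := by omega
        simp only [Prod.mk.injEq, ne_eq, e0, false_and, true_and, false_or, not_false_eq_true]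
        omega
      | succ a =>
        rw [← mem_truncate, ← mem_truncate, he]
        simp
  · have hk := card_move h
    obtain ⟨hne, ⟨i, j⟩, ⟨i', j'⟩, hc, hc', hn, he⟩ := h
    have hlen : μ.rowLen 0 = μ'.rowLen 0 := by omega
    rw [cells_move] at he
    rw [Finset.mem_erase, YoungDiagram.mem_cells, mem_truncate] at hn
    refine ⟨?_, (i + 1, j), (i' + 1, j'), (corner_succ _ _ _).1 hc, (corner_succ _ _ _).1 hc',
      ?_, ?_⟩
    · rintro rfl
      exact hne rfl
    · rw [Finset.mem_erase, YoungDiagram.mem_cells]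
      rintro ⟨h1, h2⟩
      exact hn ⟨by simpa using h1, h2⟩
    · rw [cells_move]
      intro a b
      cases a with
      | zero =>
        rw [YoungDiagram.mem_iff_lt_rowLen, YoungDiagram.mem_iff_lt_rowLen, hlen]
        simp
      | succ a =>
        rw [← mem_truncate, ← mem_truncate, he]
        simp

/-- One step changes the size and the first row by at most one. -/
theorem step_bound {ν ν' : YoungDiagram}
    (h : AddCorner ν ν' ∨ RemoveCorner ν ν' ∨ MoveCorner ν ν') :
    ν'.card ≤ ν.card + 1 ∧ ν.rowLen 0 ≤ ν'.rowLen 0 + 1 := by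
  have key : (∃ c, ν'.cells ⊆ insert c ν.cells) ∧ ∃ c, ν.cells.erase c ⊆ ν'.cells := by
    rcases h with ⟨c, hc, hn, he⟩ | ⟨c, hc, he⟩ | ⟨-, c, c', hc, hc', hn, he⟩
    · exact ⟨⟨c, he.le⟩, c, (Finset.erase_subset _ _).trans (he ▸ Finset.subset_insert _ _)⟩
    · exact ⟨⟨c, he ▸ (Finset.erase_subset _ _).trans (Finset.subset_insert _ _)⟩, c, he.ge⟩
    · exact ⟨⟨c', he ▸ Finset.insert_subset_insert _ (Finset.erase_subset _ _)⟩, c,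
        he ▸ Finset.subset_insert _ _⟩
  obtain ⟨⟨c, hc⟩, d, hd⟩ := key
  refine ⟨(Finset.card_le_card hc).trans (Finset.card_insert_le _ _), ?_⟩
  by_contra hlt
  have aux : ∀ j, j < ν.rowLen 0 → ν'.rowLen 0 ≤ j → (0, j) = d := by
    intro j h1 h2
    by_contra hne
    have h3 : (0, j) ∈ ν'.cells := hd (Finset.mem_erase.2
      ⟨hne, (YoungDiagram.mem_iff_lt_rowLen).2 h1⟩)
    rw [YoungDiagram.mem_cells, YoungDiagram.mem_iff_lt_rowLen] at h3
    omega
  have e1 := aux (ν'.rowLen 0) (by omega) le_rfl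
  have e2 := aux (ν'.rowLen 0 + 1) (by omega) (by omega)
  rw [← e2] at e1
  simp at e1

theorem CorrSeq.step_bound' {k : ℕ} {α : YoungDiagram} (S : CorrSeq k α) (i : Fin k) :
    (S.seq i.succ).card ≤ (S.seq i.castSucc).card + 1 ∧
      (S.seq i.castSucc).rowLen 0 ≤ (S.seq i.succ).rowLen 0 + 1 := by
  rcases S.step i with ⟨h, -⟩ | ⟨h, -⟩
  · exact step_bound h
  · rw [h]; omega

theorem CorrSeq.card_le {k : ℕ} {α : YoungDiagram} (S : CorrSeq k α) (i : Fin (k + 1)) :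
    (S.seq i).card ≤ i.val := by
  induction i using Fin.induction with
  | zero => rw [S.init]; simp
  | succ i ih =>
    have := (S.step_bound' i).1
    simp only [Fin.val_castSucc, Fin.val_succ] at *
    omega

theorem CorrSeq.rowLen_le {k : ℕ} {α : YoungDiagram} (S : CorrSeq k α) (i : Fin (k + 1)) :
    (S.seq i).rowLen 0 + i.val ≤ α.rowLen 0 + k := by
  induction i using Fin.reverseInduction with
  | last => rw [S.final]; simp
  | cast i ih =>
    have := (S.step_bound' i).2
    simp only [Fin.val_castSucc, Fin.val_succ] at *
    omega

theorem KroneckerTableau.card_eq {k : ℕ} {μ lam : YoungDiagram} (K : KroneckerTableau k μ lam)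
    (i : Fin (k + 1)) : (K.seq i).card = μ.card := by
  induction i using Fin.induction with
  | zero => rw [K.init]
  | succ i ih =>
    rcases K.step i with ⟨h, -⟩ | ⟨h, -⟩
    · rw [card_move h, ih]
    · rw [h, ih]

theorem KroneckerTableau.dist_pos {k : ℕ} {μ lam : YoungDiagram} (K : KroneckerTableau k μ lam)
    (i : Fin k) (c : ℕ × ℕ) (h : K.dist i = some c) : ∃ a, c = (a + 1, c.2) := by
  rcases K.step i with ⟨-, h'⟩ | ⟨-, c', h', h1, h2⟩
  · rw [h] at h'; simp at h'
  · rw [h] at h'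
    obtain rfl : c = c' := by simpa using h'
    obtain ⟨a, b⟩ := c
    cases a with
    | zero => exact absurd ⟨h1, rfl⟩ h2
    | succ a => exact ⟨a, rfl⟩

/-- The truncation map from Kronecker tableaux to sequences. -/
def toCorr {n k : ℕ} {lam : YoungDiagram} (K : KroneckerTableau k (rowDiagram n) lam) :
    CorrSeq k (truncate lam) where
  seq i := truncate (K.seq i)
  dist i := (K.dist i).map fun c => (c.1 - 1, c.2)
  init := by rw [K.init, truncate_rowDiagram]
  final := by rw [K.final]
  step i := by
    rcases K.step i with ⟨h, h'⟩ | ⟨h, c, h', h1, h2⟩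
    · exact Or.inl ⟨move_fwd h, by rw [h']; rfl⟩
    · right
      obtain ⟨a, ha⟩ := K.dist_pos i c h'
      refine ⟨by rw [h], (c.1 - 1, c.2), by rw [h']; rfl, ?_⟩
      rw [ha] at h1 ⊢
      exact (corner_succ _ _ _).2 h1

theorem toCorr_injective {n k : ℕ} {lam : YoungDiagram} :
    Function.Injective (toCorr (n := n) (k := k) (lam := lam)) := by
  intro K L h
  have hs : (toCorr K).seq = (toCorr L).seq := by rw [h]
  have hd : (toCorr K).dist = (toCorr L).dist := by rw [h]
  have h1 : K.seq = L.seq := by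
    funext i
    exact eq_of_truncate (by rw [K.card_eq, L.card_eq]) (congrFun hs i)
  have h2 : K.dist = L.dist := by
    funext i
    have := congrFun hd i
    simp only [toCorr] at this
    rcases hK : K.dist i with _ | c <;> rcases hL : L.dist i with _ | d
    · rfl
    · rw [hK, hL] at this; simp at this
    · rw [hK, hL] at this; simp at this
    · rw [hK, hL] at this
      obtain ⟨a, ha⟩ := K.dist_pos i c hK
      obtain ⟨b, hb⟩ := L.dist_pos i d hL
      rw [ha, hb] at this ⊢
      simpa using this
  cases K; cases L
  simp only at h1 h2
  subst h1 h2
  rfl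

theorem toCorr_surjective {n k : ℕ} {lam : YoungDiagram} (hcard : lam.card = n)
    (hstable : k + lam.rowLen 1 ≤ n) :
    Function.Surjective (toCorr (n := n) (k := k) (lam := lam)) := by
  intro S
  have hrow := rowLen_truncate lam 0
  have hex : ∀ i, ∃ μ : YoungDiagram, μ.card = n ∧ truncate μ = S.seq i := by
    intro i
    apply exists_extend
    have a := S.card_le i
    have b := S.rowLen_le i
    simp only [Nat.zero_add] at hrow
    omega
  choose f hf ht using hex
  have hK : ∀ i : Fin k, (MoveCorner (f i.castSucc) (f i.succ) ∧
      (S.dist i).map (fun c => (c.1 + 1, c.2)) = none) ∨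
      (f i.succ = f i.castSucc ∧ ∃ c, (S.dist i).map (fun c => (c.1 + 1, c.2)) = some c ∧
        IsCorner (f i.succ) c ∧ ¬ IsFirstCorner (f i.succ) c) := by
    intro i
    rcases S.step i with ⟨h, h'⟩ | ⟨h, ⟨a, b⟩, h', h1⟩
    · left
      refine ⟨move_bwd (by rw [hf, hf]) (by rw [ht, ht]; exact h), by rw [h']; rfl⟩
    · right
      refine ⟨eq_of_truncate (by rw [hf, hf]) (by rw [ht, ht, h]), (a + 1, b), by rw [h']; rfl,
        ?_, ?_⟩
      · rw [← corner_succ, ht]; exact h1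
      · rintro ⟨-, h2⟩
        have c1 := S.card_le i.castSucc
        have c2 := S.rowLen_le i.succ
        rw [← h, ← ht] at c1
        rw [← ht, rowLen_truncate] at c2
        have c3 := card_split (f i.succ)
        rw [hf] at c3
        have c4 := (f i.succ).rowLen_anti 1 (a + 1) (by omega)
        simp only [Fin.val_castSucc, Fin.val_succ, Nat.zero_add] at *
        omega
  refine ⟨⟨f, fun i => (S.dist i).map (fun c => (c.1 + 1, c.2)), ?_, ?_, hK⟩, ?_⟩
  · exact eq_of_truncate (by rw [hf, card_rowDiagram]) (by rw [ht, S.init, truncate_rowDiagram])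
  · exact eq_of_truncate (by rw [hf, hcard]) (by rw [ht, S.final])
  · obtain ⟨seq, dist, hi, hfi, hst⟩ := S
    simp only [toCorr, CorrSeq.mk.injEq]
    refine ⟨funext ht, ?_⟩
    funext i
    rcases dist i with _ | c <;> simp

/-- Lemma 3.1: for `n ≥ k + λ₂` there is a bijection between Kronecker tableaux of length
`k`, initial shape `(n)` and final shape `λ`, and the sequences of diagrams from `∅` to
`λ̄` described above; in particular the two sets have the same cardinality. -/
theorem statement0 (n k : ℕ) (hn : 1 ≤ n) (hk : 1 ≤ k) (lam : YoungDiagram)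
    (hcard : lam.card = n) (hstable : k + lam.rowLen 1 ≤ n) :
    Nonempty (KroneckerTableau k (rowDiagram n) lam ≃ CorrSeq k (truncate lam)) ∧
    Nat.card (KroneckerTableau k (rowDiagram n) lam) = Nat.card (CorrSeq k (truncate lam)) := by
  have e : KroneckerTableau k (rowDiagram n) lam ≃ CorrSeq k (truncate lam) :=
    Equiv.ofBijective toCorr ⟨toCorr_injective, toCorr_surjective hcard hstable⟩
  exact ⟨⟨e⟩, Nat.card_congr e⟩

end KroneckerPaper
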